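/- arXiv:2109.07777 — 11 statements merged into one kernel-verified Lean document; each statement's English description precedes it below -/
import Mathlib

section
/- For every N ≥ 1 and every nonzero vector Φ ∈ ℝ^(2^N), there exists a probability vector P on the 4^N byte-4 values of N grabits such that ∂_N P = Φ/‖Φ‖₁; in particular ∂_N P = a·Φ with prefactor a = 1/‖Φ‖₁ > 0. -/
open scoped BigOperators

/-- The byte-4 index set of `N` grabits: pairs `(i, σ)` of bit strings. -/
abbrev Byte4 (N : ℕ) := (Fin N → Fin 2) × (Fin N → Fin 2)

/-- The `N`-grabit difference map `∂_N`:
`(∂_N P) i = ∑_σ (-1)^(σ₁+⋯+σ_N) P (i, σ)`. -/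
noncomputable def gradMap (N : ℕ) (P : Byte4 N → ℝ) : (Fin N → Fin 2) → ℝ :=
  fun i => ∑ σ : Fin N → Fin 2, (-1 : ℝ) ^ (∑ j, (σ j : ℕ)) * P (i, σ)

/-- The ℓ¹ norm of a vector on a finite index set. -/
noncomputable def l1norm {α : Type*} [Fintype α] (f : α → ℝ) : ℝ := ∑ a, |f a|

/-- every nonzero `Φ ∈ ℝ^(2^N)` arises, after normalization by its ℓ¹
norm, as the `N`-grabit difference of a probability vector on byte-4 values; the
prefactor `a = 1/‖Φ‖₁` is positive. -/
theorem exists_probVec_gradMap_eq (N : ℕ) (hN : 1 ≤ N)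
    (Φ : (Fin N → Fin 2) → ℝ) (hΦ : Φ ≠ 0) :
    ∃ P : Byte4 N → ℝ,
      (∀ b, 0 ≤ P b) ∧ (∑ b, P b = 1) ∧
      gradMap N P = (1 / l1norm Φ) • Φ ∧ 0 < 1 / l1norm Φ := by
  have hL : 0 < l1norm Φ := by
    obtain ⟨a, ha⟩ := Function.ne_iff.mp hΦ
    exact Finset.sum_pos' (fun _ _ => abs_nonneg _) ⟨a, Finset.mem_univ _, abs_pos.mpr ha⟩
  have hs : ∀ i, ∃ σ : Fin N → Fin 2, (-1 : ℝ) ^ (∑ j, (σ j : ℕ)) * |Φ i| = Φ i := by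
    intro i
    rcases le_total 0 (Φ i) with h | h
    · exact ⟨0, by simp [abs_of_nonneg h]⟩
    · refine ⟨fun j => if j = ⟨0, hN⟩ then 1 else 0, ?_⟩
      have : (∑ j : Fin N, (((if j = ⟨0, hN⟩ then 1 else 0 : Fin 2)) : ℕ)) = 1 := by
        rw [Finset.sum_eq_single ⟨0, hN⟩]
        · simp
        · intro b _ hb
          simp [hb]
        · simp
      rw [this, abs_of_nonpos h]
      ring
  choose s hs using hs
  refine ⟨fun b => if b.2 = s b.1 then |Φ b.1| / l1norm Φ else 0, ?_, ?_, ?_, by positivity⟩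
  · intro b
    dsimp only
    split_ifs
    · positivity
    · exact le_rfl
  · rw [Fintype.sum_prod_type]
    simp only [Finset.sum_ite_eq', Finset.sum_ite_eq, Finset.mem_univ, if_true]
    rw [← Finset.sum_div]
    exact div_self hL.ne'
  · funext i
    simp only [gradMap, mul_ite, mul_zero, Finset.sum_ite_eq', Finset.sum_ite_eq,
      Finset.mem_univ, if_true, Pi.smul_apply, smul_eq_mul]
    rw [← mul_div_assoc, hs i]
    ring
end

section
/- Index the byte-4 values of two grabits by pairs ((i₁,σ₁),(i₂,σ₂)) with i₁,σ₁,i₂,σ₂ ∈ {0,1}, and let S_CNOT be the permutation matrix on ℝ^16 induced by the bijection ((i₁,σ₁),(i₂,σ₂)) ↦ ((i₁,σ₁),(i₂⊕i₁,σ₂)), where ⊕ is addition mod 2. Then S_CNOT is a stochastic matrix and satisfies ∂₂ ∘ S_CNOT = U_CNOT ∘ ∂₂, where U_CNOT is the permutation matrix on ℝ^(2²) (indexed by (i₁,i₂) ∈ {0,1}²) induced by (i₁,i₂) ↦ (i₁, i₂⊕i₁). -/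
open scoped BigOperators

/-- Byte-4 values of two grabits: pairs `((i₁,σ₁),(i₂,σ₂))`. -/
abbrev TwoGrabit := (Fin 2 × Fin 2) × (Fin 2 × Fin 2)

/-- The two-grabit difference map `∂₂`:
`(∂₂ P)_(i₁,i₂) = ∑_{σ₁,σ₂} (−1)^(σ₁+σ₂) P ((i₁,σ₁),(i₂,σ₂))`. -/
noncomputable def del2 (P : TwoGrabit → ℝ) : Fin 2 × Fin 2 → ℝ :=
  fun p => ∑ σ₁ : Fin 2, ∑ σ₂ : Fin 2,
    (-1 : ℝ) ^ ((σ₁ : ℕ) + (σ₂ : ℕ)) * P ((p.1, σ₁), (p.2, σ₂))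

/-- A stochastic matrix: nonnegative entries, each column sums to 1. -/
def IsStochastic {α : Type*} [Fintype α] (S : Matrix α α ℝ) : Prop :=
  (∀ i j, 0 ≤ S i j) ∧ ∀ j, ∑ i, S i j = 1

/-- The CNOT bijection on byte-4 values: `((i₁,σ₁),(i₂,σ₂)) ↦ ((i₁,σ₁),(i₂⊕i₁,σ₂))`. -/
def cnotB4 : TwoGrabit → TwoGrabit :=
  fun x => ((x.1.1, x.1.2), (x.2.1 + x.1.1, x.2.2))

/-- The permutation matrix on `ℝ^16` induced by `cnotB4`. -/
def S_CNOT : Matrix TwoGrabit TwoGrabit ℝ :=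
  fun x y => if x = cnotB4 y then 1 else 0

/-- The CNOT bijection on logical values: `(i₁,i₂) ↦ (i₁,i₂⊕i₁)`. -/
def cnotLogical : Fin 2 × Fin 2 → Fin 2 × Fin 2 :=
  fun x => (x.1, x.2 + x.1)

/-- The permutation matrix on `ℝ^(2²)` induced by `cnotLogical`. -/
def U_CNOT : Matrix (Fin 2 × Fin 2) (Fin 2 × Fin 2) ℝ :=
  fun x y => if x = cnotLogical y then 1 else 0

theorem cnotB4_swap : ∀ x y : TwoGrabit, (x = cnotB4 y) ↔ (y = cnotB4 x) := by
  unfold cnotB4; decide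

theorem cnotLogical_swap :
    ∀ x y : Fin 2 × Fin 2, (x = cnotLogical y) ↔ (y = cnotLogical x) := by
  unfold cnotLogical; decide

theorem S_CNOT_mulVec (P : TwoGrabit → ℝ) (x : TwoGrabit) :
    S_CNOT.mulVec P x = P (cnotB4 x) := by
  simp [Matrix.mulVec, dotProduct, S_CNOT, cnotB4_swap x]

theorem U_CNOT_mulVec (Q : Fin 2 × Fin 2 → ℝ) (x : Fin 2 × Fin 2) :
    U_CNOT.mulVec Q x = Q (cnotLogical x) := by
  simp [Matrix.mulVec, dotProduct, U_CNOT, cnotLogical_swap x]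

/-- `S_CNOT` is stochastic and `∂₂ ∘ S_CNOT = U_CNOT ∘ ∂₂`. -/
theorem S_CNOT_stochastic_and_intertwines :
    IsStochastic S_CNOT ∧
      ∀ P : TwoGrabit → ℝ, del2 (S_CNOT.mulVec P) = U_CNOT.mulVec (del2 P) := by
  refine ⟨⟨fun i j => ?_, fun j => ?_⟩, fun P => ?_⟩
  · unfold S_CNOT
    split_ifs <;> norm_num
  · simp [S_CNOT]
  · funext p
    rw [U_CNOT_mulVec]
    simp only [del2, S_CNOT_mulVec, cnotB4, cnotLogical]
end

section
/- Let 0 < φ ≤ π/2 and q = cot φ ≥ 0. The 4×4 matrix S = (1/(1+q))·[[q,0,0,1],[0,q,1,0],[1,0,q,0],[0,1,0,q]] is a stochastic matrix and satisfies ∂₁ ∘ S = (√(1+q²)/(1+q))·R_φ ∘ ∂₁ as linear maps from ℝ⁴ to ℝ², where R_φ = [[cos φ, −sin φ],[sin φ, cos φ]] is the rotation matrix by angle φ. (Stochastic emulation of the rotation gate on the ReIm grabit.) -/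
open scoped BigOperators Matrix

/-- The single-grabit difference map `∂₁ : ℝ⁴ → ℝ²`,
`P = (P₀,P₁,P₂,P₃) ↦ (P₀ − P₁, P₂ − P₃)`. -/
def del1 (P : Fin 4 → ℝ) : Fin 2 → ℝ := ![P 0 - P 1, P 2 - P 3]

/-- The stochastic map emulating the rotation gate, for amplitude ratio `q`. -/
noncomputable def S_rot (q : ℝ) : Matrix (Fin 4) (Fin 4) ℝ :=
  (1 / (1 + q)) • !![q, 0, 0, 1; 0, q, 1, 0; 1, 0, q, 0; 0, 1, 0, q]

/-- The rotation matrix by angle `φ`. -/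
noncomputable def Rot (φ : ℝ) : Matrix (Fin 2) (Fin 2) ℝ :=
  !![Real.cos φ, -Real.sin φ; Real.sin φ, Real.cos φ]

/-- for `0 < φ ≤ π/2` and `q = cot φ ≥ 0`, the matrix `S_rot q` is
stochastic and `∂₁ ∘ S_rot q = (√(1+q²)/(1+q)) · R_φ ∘ ∂₁`. -/
theorem S_rot_stochastic_and_intertwines (φ q : ℝ)
    (hφ₀ : 0 < φ) (hφ₁ : φ ≤ Real.pi / 2) (hq : q = Real.cot φ) :
    0 ≤ q ∧ IsStochastic (S_rot q) ∧
      ∀ P : Fin 4 → ℝ,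
        del1 ((S_rot q).mulVec P) =
          (Real.sqrt (1 + q ^ 2) / (1 + q)) • (Rot φ).mulVec (del1 P) := by
  have hs : 0 < Real.sin φ := Real.sin_pos_of_pos_of_lt_pi hφ₀ (by linarith [Real.pi_pos])
  have hc : 0 ≤ Real.cos φ := Real.cos_nonneg_of_mem_Icc ⟨by linarith, hφ₁⟩
  have hq' : q = Real.cos φ / Real.sin φ := by rw [hq, Real.cot_eq_cos_div_sin]
  have hq0 : 0 ≤ q := by rw [hq']; positivity
  have h1 : 0 < 1 + q := by linarith
  have hsq : Real.sqrt (1 + q ^ 2) = 1 / Real.sin φ := by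
    rw [Real.sqrt_eq_iff_mul_self_eq (by positivity) (by positivity), hq']
    field_simp
    linarith [Real.sin_sq_add_cos_sq φ]
  have hqs : q * Real.sin φ = Real.cos φ := by rw [hq']; field_simp
  refine ⟨hq0, ⟨?_, ?_⟩, ?_⟩
  · intro i j
    have h2 : 0 ≤ 1 / (1 + q) := by positivity
    rw [S_rot, Matrix.smul_apply, smul_eq_mul]
    apply mul_nonneg h2
    fin_cases i <;> fin_cases j <;> simp [hq0]
  · intro j
    fin_cases j <;> simp [S_rot, Fin.sum_univ_four] <;> field_simp <;> ring
  · intro P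
    rw [hsq]
    ext i
    fin_cases i <;>
      simp [del1, S_rot, Rot, Matrix.mulVec, dotProduct, Fin.sum_univ_four, Fin.sum_univ_two] <;>
      rw [← hqs] <;> field_simp <;> ring
end

section
/- Let 0 < φ ≤ π/2, q = cot φ ≥ 0, 𝒩 = √(1+q²)/(1+q), and r₀ = (1−𝒩)/2. On ℝ^16 = ℝ⁴ ⊗ ℝ⁴ (control grabit ⊗ ReIm grabit, each factor indexed by byte-4 values 0,1,2,3), define S_full to act on the subspace where the control byte-4 value lies in {0,1} as (R₂ on the control) ⊗ 𝟙₄, where R₂ = [[1−r₀, r₀],[r₀, 1−r₀]] exchanges control values 0↔1 with probability r₀, and on the subspace where the control byte-4 value lies in {2,3} as 𝟙₂ ⊗ S, where S = (1/(1+q))·[[q,0,0,1],[0,q,1,0],[1,0,q,0],[0,1,0,q]]. Then S_full is a stochastic matrix and satisfies ∂₂ ∘ S_full = 𝒩·Ũ_φ ∘ ∂₂, where Ũ_φ is the block-diagonal 4×4 matrix diag(1,1) ⊕ [[cos φ, −sin φ],[sin φ, cos φ]] (the realification of the general phase gate diag(1, e^{iφ})). (Stochastic emulation of the general phase gate including the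 amplitude-reduction gate.) -/
open scoped BigOperators Matrix

/-- Combine a byte-logical value `i` and a gradient value `σ` into a byte-4 value `2i+σ`. -/
def b4 (i σ : Fin 2) : Fin 4 := ⟨2 * i.val + σ.val, by omega⟩

/-- The two-grabit difference map `∂₂` on `ℝ^16 = ℝ⁴ ⊗ ℝ⁴`, each factor indexed by
byte-4 values `I = 2i+σ`. -/
noncomputable def del2b4 (P : Fin 4 × Fin 4 → ℝ) : Fin 2 × Fin 2 → ℝ :=
  fun p => ∑ σ₁ : Fin 2, ∑ σ₂ : Fin 2,
    (-1 : ℝ) ^ ((σ₁ : ℕ) + (σ₂ : ℕ)) * P (b4 p.1 σ₁, b4 p.2 σ₂)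

/-- The amplitude-reduction gate `R₂` exchanging the two byte-4 values with probability `r`. -/
def R2mat (r : ℝ) : Matrix (Fin 2) (Fin 2) ℝ := !![1 - r, r; r, 1 - r]

/-- The full stochastic map for the general phase gate on control ⊗ ReIm grabit:
it acts as `R₂ ⊗ 𝟙₄` on the subspace with control byte-4 value in `{0,1}` and as
`𝟙₂ ⊗ S_rot q` on the subspace with control byte-4 value in `{2,3}`. -/
noncomputable def Sfull (q r : ℝ) : Matrix (Fin 4 × Fin 4) (Fin 4 × Fin 4) ℝ :=
  fun x y =>
    if hy : (y.1 : ℕ) < 2 then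
      (if hx : (x.1 : ℕ) < 2 then
        R2mat r ⟨x.1, hx⟩ ⟨y.1, hy⟩ * (if x.2 = y.2 then 1 else 0)
      else 0)
    else
      (if x.1 = y.1 then 1 else 0) * S_rot q x.2 y.2

/-- The realification `Ũ_φ = diag(1,1) ⊕ R_φ` of the general phase gate `diag(1, e^{iφ})`,
indexed by (logical qubit value, ReIm value). -/
noncomputable def Utilde (φ : ℝ) : Matrix (Fin 2 × Fin 2) (Fin 2 × Fin 2) ℝ :=
  fun x y =>
    if x.1 = y.1 then
      (if x.1 = 0 then (if x.2 = y.2 then 1 else 0)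
       else !![Real.cos φ, -Real.sin φ; Real.sin φ, Real.cos φ] x.2 y.2)
    else 0

/-- for `0 < φ ≤ π/2`, `q = cot φ`, `𝒩 = √(1+q²)/(1+q)`, `r₀ = (1−𝒩)/2`,
the matrix `Sfull q r₀` is stochastic and `∂₂ ∘ Sfull = 𝒩 · Ũ_φ ∘ ∂₂`. -/
theorem Sfull_stochastic_and_intertwines (φ q N r₀ : ℝ)
    (hφ₀ : 0 < φ) (hφ₁ : φ ≤ Real.pi / 2) (hq : q = Real.cot φ)
    (hN : N = Real.sqrt (1 + q ^ 2) / (1 + q)) (hr₀ : r₀ = (1 - N) / 2) :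
    IsStochastic (Sfull q r₀) ∧
      ∀ P : Fin 4 × Fin 4 → ℝ,
        del2b4 ((Sfull q r₀).mulVec P) = N • (Utilde φ).mulVec (del2b4 P) := by
  have hs : 0 < Real.sin φ := Real.sin_pos_of_pos_of_lt_pi hφ₀ (by linarith [Real.pi_pos])
  have hc : 0 ≤ Real.cos φ := Real.cos_nonneg_of_mem_Icc ⟨by linarith [Real.pi_pos], hφ₁⟩
  have hqd : q * Real.sin φ = Real.cos φ := by
    rw [hq, Real.cot_eq_cos_div_sin]; field_simp
  have hq0 : 0 ≤ q := by rw [hq, Real.cot_eq_cos_div_sin]; positivity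
  have hsq : Real.sqrt (1 + q ^ 2) * Real.sin φ = 1 := by
    have h1 : Real.sqrt (1 + q ^ 2) = 1 / Real.sin φ := by
      rw [Real.sqrt_eq_iff_mul_self_eq (by positivity) (by positivity)]
      field_simp
      nlinarith [Real.sin_sq_add_cos_sq φ]
    rw [h1]; field_simp
  have hNs : N * Real.sin φ = 1 / (1 + q) := by
    rw [hN, div_mul_eq_mul_div, hsq]
  have hNc : N * Real.cos φ = 1 / (1 + q) * q := by
    rw [← hqd, ← hNs]; ring
  have hN0 : 0 ≤ N := by rw [hN]; positivity
  have hN1 : N ≤ 1 := by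
    rw [hN, div_le_one (by positivity)]
    apply Real.sqrt_le_iff.mpr
    constructor <;> nlinarith
  have hk : 1 / (1 + q) * q + 1 / (1 + q) = 1 := by field_simp; ring
  have hk0 : 0 ≤ 1 / (1 + q) := by positivity
  have hr1 : 0 ≤ r₀ := by linarith
  have hr2 : 0 ≤ 1 - r₀ := by linarith
  have hNr : N = 1 - 2 * r₀ := by linarith
  have hR : ∀ i j, 0 ≤ R2mat r₀ i j := by
    intro i j; fin_cases i <;> fin_cases j <;> simp [R2mat] <;> linarith
  have hS : ∀ i j, 0 ≤ S_rot q i j := by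
    intro i j
    rw [S_rot, Matrix.smul_apply, smul_eq_mul]
    apply mul_nonneg hk0
    fin_cases i <;> fin_cases j <;> simp [hq0]
  refine ⟨⟨?_, ?_⟩, ?_⟩
  · intro i j
    unfold Sfull
    split_ifs <;> simp [hR, hS]
  · rintro ⟨a, b⟩
    rw [Fintype.sum_prod_type]
    generalize hkk : 1 / (1 + q) = k at *
    fin_cases a <;> fin_cases b <;>
      simp [Fin.sum_univ_four, Sfull, R2mat, S_rot, hkk, -one_div] <;> linarith
  · intro P
    generalize hkk : 1 / (1 + q) = k at *
    clear hN hq hR hS hsq hqd hr₀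
    ext ⟨a, b⟩
    fin_cases a <;> fin_cases b <;>
      simp [del2b4, b4, Matrix.mulVec, dotProduct, Fintype.sum_prod_type, Fin.sum_univ_four,
        Sfull, Utilde, R2mat, S_rot, hkk, -one_div]
    · rw [hNr]; ring
    · rw [hNr]; ring
    · rw [mul_add]
      simp only [mul_neg, neg_mul, ← mul_assoc, hNs, hNc]
      ring
    · rw [mul_add]
      simp only [← mul_assoc, hNs, hNc]
      ring
end

section
/- Let S_H = (1/2)·[[1,0,1,0],[0,1,0,1],[1,0,0,1],[0,1,1,0]]. For every n ≥ 1, the 2n-fold iterate applied to the probability vector (1,0,0,0)ᵀ equals S_H^{2n}(1,0,0,0)ᵀ = (1/4)·(1,1,1,1)ᵀ + 2^{−(n+1)}·(1,−1,0,0)ᵀ; consequently ∂₁(S_H^{2n}(1,0,0,0)ᵀ) = (2^{−n}, 0), i.e., the amplitude of the emulated state decreases exponentially with the number of Hadamard gates while the state direction remains correct. -/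
open scoped BigOperators Matrix

/-- The stochastic map emulating the Hadamard gate. -/
noncomputable def S_H : Matrix (Fin 4) (Fin 4) ℝ :=
  (1 / 2 : ℝ) • !![1, 0, 1, 0; 0, 1, 0, 1; 1, 0, 0, 1; 0, 1, 1, 0]

theorem S_H_mulVec (a b c d : ℝ) : S_H.mulVec ![a, b, c, d] =
    ![(a + c) / 2, (b + d) / 2, (a + d) / 2, (b + c) / 2] := by
  ext i
  fin_cases i <;> simp [S_H, Matrix.mulVec, dotProduct, Fin.sum_univ_four] <;> ring

/-- the `2n`-fold iterate of `S_H` applied to the probability vector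
`(1,0,0,0)ᵀ` equals `(1/4)(1,1,1,1)ᵀ + 2^{-(n+1)}(1,-1,0,0)ᵀ`, and its difference
`∂₁` equals `(2^{-n}, 0)`: the amplitude decays exponentially with the number of
Hadamard gates while the state direction remains correct. -/
theorem S_H_iterate (n : ℕ) (hn : 1 ≤ n) :
    (S_H ^ (2 * n)).mulVec ![1, 0, 0, 0] =
        (1 / 4 : ℝ) • ![1, 1, 1, 1] + ((1 : ℝ) / 2 ^ (n + 1)) • ![1, -1, 0, 0] ∧
      del1 ((S_H ^ (2 * n)).mulVec ![1, 0, 0, 0]) = ![(1 : ℝ) / 2 ^ n, 0] := by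
  have h1 : ∀ n : ℕ, 1 ≤ n → (S_H ^ (2 * n)).mulVec ![1, 0, 0, 0] =
        (1 / 4 : ℝ) • ![1, 1, 1, 1] + ((1 : ℝ) / 2 ^ (n + 1)) • ![1, -1, 0, 0] := by
    intro n hn
    induction n, hn using Nat.le_induction with
    | base => rw [mul_one, pow_two, ← Matrix.mulVec_mulVec, S_H_mulVec, S_H_mulVec]
              ext i; fin_cases i <;> simp <;> norm_num
    | succ k hk ih =>
      have e : 2 * (k + 1) = 2 + 2 * k := by ring
      have h2 : (1 / 4 : ℝ) • ![1, 1, 1, 1] + ((1 : ℝ) / 2 ^ (k + 1)) • ![1, -1, 0, 0]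
          = ![1 / 4 + 1 / 2 ^ (k + 1), 1 / 4 - 1 / 2 ^ (k + 1), 1 / 4, (1 / 4 : ℝ)] := by
        ext i; fin_cases i <;> simp <;> ring
      rw [e, pow_add, ← Matrix.mulVec_mulVec, ih, h2, pow_two, ← Matrix.mulVec_mulVec,
        S_H_mulVec, S_H_mulVec]
      ext i; fin_cases i <;> simp <;> ring
  refine ⟨h1 n hn, ?_⟩
  rw [h1 n hn]
  ext i; fin_cases i <;> simp [del1] <;> ring
end

section
/- Let q > 0 and let P = (P₀,P₁,P₂,P₃) be a probability vector on {0,1,2,3} satisfying P₀ − P₁ = q·(P₂ − P₃). Then |P₂ − P₃| ≤ min((P₀+P₁)/q, 1 − (P₀+P₁)) ≤ 1/(1+q), and the maximal value 1/(1+q) is attained by the probability vector P = (q/(1+q), 0, 1/(1+q), 0), which moreover satisfies P₀+P₁ = q/(1+q). (Maximum-contrast bound for a single grabit with amplitude ratio q.) -/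
open scoped BigOperators Matrix

/-- maximum-contrast bound for a single grabit with amplitude ratio `q`:
any probability vector on `{0,1,2,3}` with `P₀−P₁ = q(P₂−P₃)` satisfies
`|P₂−P₃| ≤ min((P₀+P₁)/q, 1−(P₀+P₁)) ≤ 1/(1+q)`, and the bound `1/(1+q)` is attained
by `P = (q/(1+q), 0, 1/(1+q), 0)`, which moreover has `P₀+P₁ = q/(1+q)`. -/
theorem max_contrast_bound (q : ℝ) (hq : 0 < q) :
    (∀ P : Fin 4 → ℝ, (∀ i, 0 ≤ P i) → (∑ i, P i = 1) →
      P 0 - P 1 = q * (P 2 - P 3) →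
      |P 2 - P 3| ≤ min ((P 0 + P 1) / q) (1 - (P 0 + P 1)) ∧
        min ((P 0 + P 1) / q) (1 - (P 0 + P 1)) ≤ 1 / (1 + q)) ∧
    (∀ i, (0 : ℝ) ≤ ![q / (1 + q), 0, 1 / (1 + q), 0] i) ∧
    (∑ i, ![q / (1 + q), 0, 1 / (1 + q), (0 : ℝ)] i = 1) ∧
    (![q / (1 + q), 0, 1 / (1 + q), (0 : ℝ)] 0 - ![q / (1 + q), 0, 1 / (1 + q), (0 : ℝ)] 1 =
      q * (![q / (1 + q), 0, 1 / (1 + q), (0 : ℝ)] 2 - ![q / (1 + q), 0, 1 / (1 + q), (0 : ℝ)] 3)) ∧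
    |![q / (1 + q), 0, 1 / (1 + q), (0 : ℝ)] 2 - ![q / (1 + q), 0, 1 / (1 + q), (0 : ℝ)] 3| =
      1 / (1 + q) ∧
    ![q / (1 + q), 0, 1 / (1 + q), (0 : ℝ)] 0 + ![q / (1 + q), 0, 1 / (1 + q), (0 : ℝ)] 1 =
      q / (1 + q) := by
  have h1 : (0 : ℝ) < 1 + q := by linarith
  refine ⟨?_, ?_, ?_, ?_, ?_, ?_⟩
  · intro P hP hs hd
    rw [Fin.sum_univ_four] at hs
    have p0 := hP 0
    have p1 := hP 1
    have p2 := hP 2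
    have p3 := hP 3
    refine ⟨le_min ?_ ?_, ?_⟩
    · rw [le_div_iff₀ hq, ← abs_of_pos hq, ← abs_mul, mul_comm, ← hd, abs_le]
      constructor <;> linarith
    · rw [abs_le]
      constructor <;> linarith
    · rw [min_le_iff]
      by_cases h : (P 0 + P 1) * (1 + q) ≤ q
      · left
        rw [div_le_div_iff₀ hq h1]
        linarith
      · right
        rw [le_div_iff₀ h1]
        linarith
  · intro i
    fin_cases i <;> simp <;> positivity
  · simp [Fin.sum_univ_four]
    field_simp
    try ring
  · simp
    field_simp
  · simp
    exact h1.le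
  · simp
end

section
/- For every N ≥ 1 and every nonzero ψ ∈ ℝ^(2^N), there exists a probability vector P on the byte-4 values of N grabits such that ∂_N P = ψ/‖ψ‖₁ and, for every i ∈ {0,1}^N, the physical (marginal) probability satisfies Σ_{σ ∈ {0,1}^N} P_{(i,σ)} = |ψ_i|/‖ψ‖₁. (The refreshment conditions ψ' = d·ψ and p̃' = c·|ψ| are simultaneously satisfiable with d = c = 1/‖ψ‖₁, enforcing the Born-1 rule.) -/
open scoped BigOperators

/-- for every nonzero `ψ ∈ ℝ^(2^N)` there is a probability vector `P` on
byte-4 values with `∂_N P = ψ/‖ψ‖₁` whose physical marginals obey the Born-1 rule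
`∑_σ P (i,σ) = |ψ_i|/‖ψ‖₁`. -/
theorem exists_refreshed_representation (N : ℕ) (hN : 1 ≤ N)
    (ψ : (Fin N → Fin 2) → ℝ) (hψ : ψ ≠ 0) :
    ∃ P : Byte4 N → ℝ,
      (∀ b, 0 ≤ P b) ∧ (∑ b, P b = 1) ∧
      gradMap N P = (1 / l1norm ψ) • ψ ∧
      ∀ i : Fin N → Fin 2,
        ∑ σ : Fin N → Fin 2, P (i, σ) = |ψ i| / l1norm ψ := by
  classical
  have hL : 0 < l1norm ψ := by
    obtain ⟨a, ha⟩ := Function.ne_iff.mp hψ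
    exact Finset.sum_pos' (fun i _ => abs_nonneg _) ⟨a, Finset.mem_univ a, abs_pos.mpr ha⟩
  let e : Fin N → Fin 2 := fun j => if j = ⟨0, hN⟩ then 1 else 0
  have he : ∑ j, (e j : ℕ) = 1 := by
    rw [Finset.sum_eq_single (⟨0, hN⟩ : Fin N)]
    · simp [e]
    · intro b _ hb
      simp [e, hb]
    · simp
  let s : (Fin N → Fin 2) → (Fin N → Fin 2) := fun i => if 0 ≤ ψ i then 0 else e
  have hm : ∀ i : Fin N → Fin 2,
      ∑ σ : Fin N → Fin 2, (if σ = s i then |ψ i| / l1norm ψ else 0) = |ψ i| / l1norm ψ := by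
    intro i
    simp
  refine ⟨fun b => if b.2 = s b.1 then |ψ b.1| / l1norm ψ else 0, ?_, ?_, ?_, hm⟩
  · intro b
    dsimp only
    split_ifs
    · positivity
    · exact le_rfl
  · rw [Fintype.sum_prod_type]
    simp only [hm]
    rw [← Finset.sum_div]
    exact div_self hL.ne'
  · funext i
    simp only [gradMap, mul_ite, mul_zero, Finset.sum_ite_eq', Finset.sum_ite_eq,
      Finset.mem_univ, if_true, Pi.smul_apply, smul_eq_mul]
    by_cases h : 0 ≤ ψ i
    · have hs : s i = 0 := if_pos h
      rw [hs, abs_of_nonneg h]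
      simp
      ring
    · have hs : s i = e := if_neg h
      rw [hs, he, abs_of_neg (not_le.mp h)]
      ring
end

section
/- Let J be a nonempty finite index set and define the linear map H̃ : ℝ^({0,1}×J) → ℝ^({0,1}×J) by (H̃ψ)_{(0,j)} = (ψ_{(0,j)} + ψ_{(1,j)})/2 and (H̃ψ)_{(1,j)} = (ψ_{(0,j)} − ψ_{(1,j)})/2 (a Hadamard gate applied to one grabit of a multi-grabit state). Then for every ψ, ‖H̃ψ‖₁ = Σ_{j∈J} max(|ψ_{(0,j)}|, |ψ_{(1,j)}|) ≥ (1/2)‖ψ‖₁, and there exists a nonzero ψ with ‖H̃ψ‖₁ = (1/2)‖ψ‖₁. Hence the destructive-interference measure 𝒟_H = sup over nonzero ψ of (1 − ‖H̃ψ‖₁/‖ψ‖₁) equals 1/2. -/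
open scoped BigOperators

/-- A Hadamard gate applied to one grabit of a multi-grabit state:
`(H̃ψ)_(0,j) = (ψ_(0,j) + ψ_(1,j))/2`, `(H̃ψ)_(1,j) = (ψ_(0,j) − ψ_(1,j))/2`. -/
noncomputable def Htilde {J : Type*} (ψ : Fin 2 × J → ℝ) : Fin 2 × J → ℝ :=
  fun p =>
    if p.1 = 0 then (ψ (0, p.2) + ψ (1, p.2)) / 2
    else (ψ (0, p.2) - ψ (1, p.2)) / 2

theorem l1norm_split {J : Type*} [Fintype J] (f : Fin 2 × J → ℝ) :
    l1norm f = ∑ j : J, (|f (0, j)| + |f (1, j)|) := by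
  unfold l1norm
  rw [Fintype.sum_prod_type, Fin.sum_univ_two, Finset.sum_add_distrib]

theorem abs_half_add_sub (a b : ℝ) : |(a + b) / 2| + |(a - b) / 2| = max |a| |b| := by
  rcases abs_cases ((a + b) / 2) with h1 | h1 <;> rcases abs_cases ((a - b) / 2) with h2 | h2 <;>
  rcases abs_cases a with h3 | h3 <;> rcases abs_cases b with h4 | h4 <;>
  rcases max_cases |a| |b| with h5 | h5 <;> linarith

theorem l1norm_Htilde {J : Type*} [Fintype J] (ψ : Fin 2 × J → ℝ) :
    l1norm (Htilde ψ) = ∑ j : J, max |ψ (0, j)| |ψ (1, j)| := by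
  rw [l1norm_split]
  refine Finset.sum_congr rfl fun j _ => ?_
  rw [← abs_half_add_sub]
  simp [Htilde]

theorem l1norm_half_le {J : Type*} [Fintype J] (ψ : Fin 2 × J → ℝ) :
    (1 / 2) * l1norm ψ ≤ l1norm (Htilde ψ) := by
  rw [l1norm_Htilde, l1norm_split, Finset.mul_sum]
  refine Finset.sum_le_sum fun j _ => ?_
  linarith [le_max_left |ψ (0, j)| |ψ (1, j)|, le_max_right |ψ (0, j)| |ψ (1, j)|]

theorem l1norm_pos_of_ne {α : Type*} [Fintype α] (f : α → ℝ) (hf : f ≠ 0) : 0 < l1norm f := by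
  obtain ⟨a, ha⟩ := Function.ne_iff.mp hf
  exact Finset.sum_pos' (fun _ _ => abs_nonneg _) ⟨a, Finset.mem_univ a, abs_pos.mpr ha⟩

/-- `‖H̃ψ‖₁ = ∑_j max(|ψ_(0,j)|, |ψ_(1,j)|) ≥ (1/2)‖ψ‖₁`, with equality
attained by some nonzero `ψ`; hence the destructive-interference measure of `H̃`,
the supremum of `1 − ‖H̃ψ‖₁/‖ψ‖₁` over nonzero `ψ`, equals `1/2`. -/
theorem hadamard_destructive_interference {J : Type*} [Fintype J] [Nonempty J] :
    (∀ ψ : Fin 2 × J → ℝ,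
      l1norm (Htilde ψ) = ∑ j : J, max |ψ (0, j)| |ψ (1, j)| ∧
        (1 / 2) * l1norm ψ ≤ l1norm (Htilde ψ)) ∧
    (∃ ψ : Fin 2 × J → ℝ, ψ ≠ 0 ∧ l1norm (Htilde ψ) = (1 / 2) * l1norm ψ) ∧
    IsGreatest {x : ℝ | ∃ ψ : Fin 2 × J → ℝ,
      ψ ≠ 0 ∧ x = 1 - l1norm (Htilde ψ) / l1norm ψ} (1 / 2) := by
  have hex : ∃ ψ : Fin 2 × J → ℝ, ψ ≠ 0 ∧ l1norm (Htilde ψ) = (1 / 2) * l1norm ψ := by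
    refine ⟨fun _ => 1, ?_, ?_⟩
    · obtain ⟨j⟩ := ‹Nonempty J›
      exact Function.ne_iff.mpr ⟨(0, j), one_ne_zero⟩
    · rw [l1norm_Htilde, l1norm_split, Finset.mul_sum]
      refine Finset.sum_congr rfl fun j _ => ?_
      norm_num
  refine ⟨fun ψ => ⟨l1norm_Htilde ψ, l1norm_half_le ψ⟩, hex, ?_, ?_⟩
  · obtain ⟨ψ, h0, h⟩ := hex
    refine ⟨ψ, h0, ?_⟩
    have hp := l1norm_pos_of_ne ψ h0
    rw [h, mul_div_cancel_right₀ _ hp.ne']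
    norm_num
  · rintro x ⟨ψ, h0, rfl⟩
    have hp := l1norm_pos_of_ne ψ h0
    have := (le_div_iff₀ hp).mpr (l1norm_half_le ψ)
    linarith
end

section
/- Let q ≥ 0 and T = (1/(1+q))·[[q,−1],[1,q]] acting on ℝ². Then for every ψ ∈ ℝ², ‖Tψ‖₁ ≥ ((1+q²)/(1+q)²)·‖ψ‖₁, and equality holds for the nonzero vector ψ = (1,q). Hence the destructive-interference measure of the stochastic emulation of the phase gate with q = |cot φ| equals 𝒟_{R_φ} = 1 − (1+q²)/(1+q)². -/
open scoped BigOperators Matrix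

/-- The effective map on grabit amplitudes induced by the stochastic emulation of the
phase gate, with `q = |cot φ|`. -/
noncomputable def Tphase (q : ℝ) : Matrix (Fin 2) (Fin 2) ℝ :=
  (1 / (1 + q)) • !![q, -1; 1, q]

/-- `‖Tψ‖₁ ≥ ((1+q²)/(1+q)²)‖ψ‖₁` for all `ψ`, with equality at the
nonzero vector `ψ = (1,q)`; hence the destructive-interference measure of the phase-gate
emulation equals `1 − (1+q²)/(1+q)²`. -/
theorem phase_gate_destructive_interference (q : ℝ) (hq : 0 ≤ q) :
    (∀ ψ : Fin 2 → ℝ,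
      ((1 + q ^ 2) / (1 + q) ^ 2) * l1norm ψ ≤ l1norm ((Tphase q).mulVec ψ)) ∧
    (![1, q] ≠ (0 : Fin 2 → ℝ)) ∧
    l1norm ((Tphase q).mulVec ![1, q]) = ((1 + q ^ 2) / (1 + q) ^ 2) * l1norm ![1, q] ∧
    IsGreatest {x : ℝ | ∃ ψ : Fin 2 → ℝ,
        ψ ≠ 0 ∧ x = 1 - l1norm ((Tphase q).mulVec ψ) / l1norm ψ}
      (1 - (1 + q ^ 2) / (1 + q) ^ 2) := by
  have hp : 0 < 1 + q := by linarith
  have hT : ∀ ψ : Fin 2 → ℝ, l1norm ((Tphase q).mulVec ψ)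
      = (|q * ψ 0 - ψ 1| + |ψ 0 + q * ψ 1|) / (1 + q) := by
    intro ψ
    have e0 : (Tphase q).mulVec ψ 0 = (q * ψ 0 - ψ 1) / (1 + q) := by
      simp [Tphase, Matrix.mulVec, dotProduct, Fin.sum_univ_two]
      field_simp
      ring
    have e1 : (Tphase q).mulVec ψ 1 = (ψ 0 + q * ψ 1) / (1 + q) := by
      simp [Tphase, Matrix.mulVec, dotProduct, Fin.sum_univ_two]
      field_simp
    simp only [l1norm, Fin.sum_univ_two]
    rw [e0, e1, abs_div, abs_div, abs_of_pos hp, add_div]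
  have hN : ∀ ψ : Fin 2 → ℝ, l1norm ψ = |ψ 0| + |ψ 1| := by
    intro ψ
    simp [l1norm, Fin.sum_univ_two]
  have hmain : ∀ ψ : Fin 2 → ℝ,
      ((1 + q ^ 2) / (1 + q) ^ 2) * l1norm ψ ≤ l1norm ((Tphase q).mulVec ψ) := by
    intro ψ
    rw [hT, hN]
    have h0 : (1 + q ^ 2) * |ψ 0| ≤ q * |q * ψ 0 - ψ 1| + |ψ 0 + q * ψ 1| := by
      have := abs_add_le (q * (q * ψ 0 - ψ 1)) (ψ 0 + q * ψ 1)
      rw [abs_mul q, abs_of_nonneg hq] at this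
      have e : q * (q * ψ 0 - ψ 1) + (ψ 0 + q * ψ 1) = (1 + q ^ 2) * ψ 0 := by ring
      rw [e, abs_mul, abs_of_pos (show 0 < 1 + q ^ 2 by positivity)] at this
      exact this
    have h1 : (1 + q ^ 2) * |ψ 1| ≤ q * |ψ 0 + q * ψ 1| + |q * ψ 0 - ψ 1| := by
      have := abs_sub (q * (ψ 0 + q * ψ 1)) (q * ψ 0 - ψ 1)
      rw [abs_mul q, abs_of_nonneg hq] at this
      have e : q * (ψ 0 + q * ψ 1) - (q * ψ 0 - ψ 1) = (1 + q ^ 2) * ψ 1 := by ring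
      rw [e, abs_mul, abs_of_pos (show 0 < 1 + q ^ 2 by positivity)] at this
      exact this
    rw [div_mul_eq_mul_div, div_le_div_iff₀ (by positivity) hp]
    have h2 : (1 + q ^ 2) * (|ψ 0| + |ψ 1|)
        ≤ (1 + q) * (|q * ψ 0 - ψ 1| + |ψ 0 + q * ψ 1|) := by linarith
    nlinarith [mul_le_mul_of_nonneg_right h2 hp.le]
  have hne : (![1, q] ≠ (0 : Fin 2 → ℝ)) := by
    intro h
    have := congrFun h 0
    simp at this
  have heq : l1norm ((Tphase q).mulVec ![1, q])
      = ((1 + q ^ 2) / (1 + q) ^ 2) * l1norm ![1, q] := by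
    rw [hT, hN]
    have : |1 + q * q| = 1 + q ^ 2 := by
      rw [abs_of_pos (by positivity)]
      ring
    simp [this, abs_of_nonneg hq]
    field_simp
  have hpos : ∀ ψ : Fin 2 → ℝ, ψ ≠ 0 → 0 < l1norm ψ := by
    intro ψ h
    rw [hN]
    by_contra hc
    apply h
    have a0 := abs_nonneg (ψ 0)
    have a1 := abs_nonneg (ψ 1)
    have z0 : ψ 0 = 0 := abs_eq_zero.mp (by linarith)
    have z1 : ψ 1 = 0 := abs_eq_zero.mp (by linarith)
    ext i
    fin_cases i
    · exact z0
    · exact z1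
  refine ⟨hmain, hne, heq, ⟨![1, q], hne, ?_⟩, ?_⟩
  · rw [heq, mul_div_cancel_right₀ _ (hpos _ hne).ne']
  · rintro x ⟨ψ, h, rfl⟩
    have := (le_div_iff₀ (hpos ψ h)).mpr (hmain ψ)
    linarith
end

section
/- Let N ≥ 1. Suppose for j = 1,…,k, S⁽ʲ⁾ is a stochastic matrix on ℝ^(4^N), Ũ⁽ʲ⁾ is a linear map on ℝ^(2^N), and a_j ≠ 0 satisfy ∂_N ∘ S⁽ʲ⁾ = a_j · Ũ⁽ʲ⁾ ∘ ∂_N. Let Φ⁽⁰⁾ ∈ ℝ^(2^N) and set Φ⁽ʲ⁾ = Ũ⁽ʲ⁾Φ⁽ʲ⁻¹⁾, assuming Φ⁽ᵏ⁾ ≠ 0. Let Q⁽⁰⁾ be a probability vector with ∂_N Q⁽⁰⁾ = a₀·Φ⁽⁰⁾ for some a₀ ≠ 0, and for each j = 1,…,k let Q⁽ʲ⁾ be a probability vector (a refreshed state) satisfying ∂_N Q⁽ʲ⁾ = d_j · ∂_N(S⁽ʲ⁾Q⁽ʲ⁻¹⁾) for some d_j ≠ 0. If additionally the final state is refreshed,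 i.e., Σ_{σ} Q⁽ᵏ⁾_{(i,σ)} = |(∂_N Q⁽ᵏ⁾)_i| for all i ∈ {0,1}^N, then the final physical probabilities satisfy Σ_{σ ∈ {0,1}^N} Q⁽ᵏ⁾_{(i,σ)} = |Φ⁽ᵏ⁾_i| / ‖Φ⁽ᵏ⁾‖₁ for all i, i.e., they are given by the Born-1 rule applied to the exactly propagated state Φ⁽ᵏ⁾. (Deterministic content of the refreshment theorem in the infinite-sample limit.) -/
open scoped BigOperators

/-- deterministic content of the refreshment theorem.  If each stochastic
matrix `S j` intertwines with `U j` through `∂_N` up to nonzero `a j`, the exact state is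
propagated as `Φ j.succ = U j (Φ j.castSucc)` with `Φ (last k) ≠ 0`, the probability
vectors `Q j` follow the stochastic propagation up to refreshments that rescale the
represented grabit state by nonzero factors `d j`, and the final state is refreshed
(`∑_σ Q_k (i,σ) = |(∂_N Q_k)_i|`), then the final physical probabilities are given by the
Born-1 rule applied to the exactly propagated state:
`∑_σ Q_k (i,σ) = |Φ_k i| / ‖Φ_k‖₁`. -/
theorem refreshment_born1 (N k : ℕ) (hN : 1 ≤ N)
    (S : Fin k → Matrix (Byte4 N) (Byte4 N) ℝ)
    (U : Fin k → (((Fin N → Fin 2) → ℝ) →ₗ[ℝ] ((Fin N → Fin 2) → ℝ)))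
    (a : Fin k → ℝ) (ha : ∀ j, a j ≠ 0)
    (hS : ∀ j, IsStochastic (S j))
    (hintertwine : ∀ (j : Fin k) (R : Byte4 N → ℝ),
      gradMap N ((S j).mulVec R) = a j • (U j) (gradMap N R))
    (Φ : Fin (k + 1) → ((Fin N → Fin 2) → ℝ))
    (hΦrec : ∀ j : Fin k, Φ j.succ = (U j) (Φ j.castSucc))
    (hΦk : Φ (Fin.last k) ≠ 0)
    (a₀ : ℝ) (ha₀ : a₀ ≠ 0)
    (Q : Fin (k + 1) → (Byte4 N → ℝ))
    (hQprob : ∀ j, (∀ b, 0 ≤ Q j b) ∧ ∑ b, Q j b = 1)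
    (hQ0 : gradMap N (Q 0) = a₀ • Φ 0)
    (d : Fin k → ℝ) (hd : ∀ j, d j ≠ 0)
    (hQrec : ∀ j : Fin k,
      gradMap N (Q j.succ) = d j • gradMap N ((S j).mulVec (Q j.castSucc)))
    (hfinal : ∀ i : Fin N → Fin 2,
      ∑ σ : Fin N → Fin 2, Q (Fin.last k) (i, σ) = |gradMap N (Q (Fin.last k)) i|) :
    ∀ i : Fin N → Fin 2,
      ∑ σ : Fin N → Fin 2, Q (Fin.last k) (i, σ) =
        |Φ (Fin.last k) i| / l1norm (Φ (Fin.last k)) := by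
  have key : ∀ j : Fin (k + 1), ∃ c : ℝ, gradMap N (Q j) = c • Φ j := by
    intro j
    induction j using Fin.induction with
    | zero => exact ⟨a₀, hQ0⟩
    | succ j ih =>
      obtain ⟨c, hc⟩ := ih
      refine ⟨d j * (a j * c), ?_⟩
      rw [hQrec, hintertwine, hc, map_smul, ← hΦrec, smul_smul, smul_smul, mul_assoc]
  obtain ⟨c, hc⟩ := key (Fin.last k)
  have hterm : ∀ i : Fin N → Fin 2,
      ∑ σ : Fin N → Fin 2, Q (Fin.last k) (i, σ) = |c| * |Φ (Fin.last k) i| := by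
    intro i
    rw [hfinal, hc, Pi.smul_apply, smul_eq_mul, abs_mul]
  have hsum : |c| * l1norm (Φ (Fin.last k)) = 1 := by
    rw [← (hQprob (Fin.last k)).2, Fintype.sum_prod_type, l1norm, Finset.mul_sum]
    exact Finset.sum_congr rfl fun i _ => (hterm i).symm
  have hne : l1norm (Φ (Fin.last k)) ≠ 0 := right_ne_zero_of_mul_eq_one hsum
  intro i
  rw [hterm, eq_div_iff hne, mul_right_comm, hsum, one_mul]
end

section
/- Let α < β be real numbers, let h : [α,β] → ℝ be twice continuously differentiable with h'(β) = 0, h''(β) < 0, and h(x) < h(β) for all x ∈ [α,β), and let Φ : [α,β] → ℝ be continuously differentiable with Φ(β) = 0 and Φ'(β) ≠ 0. Then, as N → ∞, N·e^{−N·h(β)}·∫_α^β Φ(x)·e^{N·h(x)} dx converges to Φ'(β)/h''(β); equivalently, ∫_α^β Φ(x)e^{N h(x)}dx is asymptotically equivalent to Φ'(β)·e^{N h(β)}/(N·h''(β)). (Laplace/saddle-point asymptotics for a boundary maximum with vanishing prefactor.) -/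
open Set Filter intervalIntegral

/-- Laplace/saddle-point asymptotics for a boundary maximum with vanishing
prefactor.  If `h` is C² on `[α,β]` with `h'(β) = 0`, `h''(β) < 0`, and `h < h(β)` on
`[α,β)`, and `Φ` is C¹ on `[α,β]` with `Φ(β) = 0` and `Φ'(β) ≠ 0`, then
`N e^{−N h(β)} ∫_α^β Φ(x) e^{N h(x)} dx → Φ'(β)/h''(β)` as `N → ∞`. -/
theorem laplace_boundary_max_vanishing_prefactor
    (α β : ℝ) (hαβ : α < β) (h Φ : ℝ → ℝ)
    (hh : ContDiffOn ℝ 2 h (Icc α β))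
    (hΦ : ContDiffOn ℝ 1 Φ (Icc α β))
    (hh' : derivWithin h (Icc α β) β = 0)
    (hh'' : derivWithin (derivWithin h (Icc α β)) (Icc α β) β < 0)
    (hmax : ∀ x ∈ Ico α β, h x < h β)
    (hΦβ : Φ β = 0)
    (hΦ' : derivWithin Φ (Icc α β) β ≠ 0) :
    Tendsto
      (fun N : ℝ => N * Real.exp (-N * h β) * ∫ x in α..β, Φ x * Real.exp (N * h x))
      atTop
      (nhds (derivWithin Φ (Icc α β) β /
        derivWithin (derivWithin h (Icc α β)) (Icc α β) β)) := by
  have hud : UniqueDiffOn ℝ (Icc α β) := uniqueDiffOn_Icc hαβ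
  have hβ : β ∈ Icc α β := right_mem_Icc.2 hαβ.le
  set g := derivWithin h (Icc α β) with hg
  set B := derivWithin g (Icc α β) β with hB
  set A := derivWithin Φ (Icc α β) β with hA
  have hgC1 : ContDiffOn ℝ 1 g (Icc α β) := hh.derivWithin hud (by norm_num)
  have hgc : ContinuousOn g (Icc α β) := hgC1.continuousOn
  have hhc : ContinuousOn h (Icc α β) := hh.continuousOn
  have hΦc : ContinuousOn Φ (Icc α β) := hΦ.continuousOn
  have hgd : HasDerivWithinAt g B (Icc α β) β :=
    ((hgC1.differentiableOn (by norm_num)) β hβ).hasDerivWithinAt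
  have hΦd : HasDerivWithinAt Φ A (Icc α β) β :=
    ((hΦ.differentiableOn (by norm_num)) β hβ).hasDerivWithinAt
  have hhd : ∀ x ∈ Ioo α β, HasDerivAt h (g x) x := fun x hx =>
    ((hh.differentiableOn (by norm_num)) x (Ioo_subset_Icc_self hx)).hasDerivWithinAt.hasDerivAt
      (Icc_mem_nhds hx.1 hx.2)
  set L := A / B with hL
  set r : ℝ → ℝ := fun x => Φ x - L * g x with hr
  have hrc : ContinuousOn r (Icc α β) := hΦc.sub (continuousOn_const.mul hgc)
  have hEc : ∀ N : ℝ, ContinuousOn (fun x => Real.exp (N * (h x - h β))) (Icc α β) := fun N =>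
    Real.continuous_exp.comp_continuousOn
      (continuousOn_const.mul (hhc.sub continuousOn_const))
  have hIntegrable : ∀ (f : ℝ → ℝ), ContinuousOn f (Icc α β) → ∀ a ∈ Icc α β, ∀ b ∈ Icc α β, a ≤ b →
      IntervalIntegrable f MeasureTheory.volume a b := by
    intro f hf a ha b hb hab
    apply ContinuousOn.intervalIntegrable
    rw [uIcc_of_le hab]
    exact hf.mono (Icc_subset_Icc ha.1 hb.2)
  -- fundamental theorem of calculus
  have hftc : ∀ N : ℝ, ∀ a ∈ Icc α β,
      N * ∫ x in a..β, g x * Real.exp (N * (h x - h β)) = 1 - Real.exp (N * (h a - h β)) := by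
    intro N a ha
    have h1 : ∫ x in a..β, N * (g x * Real.exp (N * (h x - h β)))
        = Real.exp (N * (h β - h β)) - Real.exp (N * (h a - h β)) := by
      refine integral_eq_sub_of_hasDerivAt_of_le (f := fun x => Real.exp (N * (h x - h β))) ha.2
        ((hEc N).mono (Icc_subset_Icc ha.1 le_rfl)) ?_ ?_
      · intro x hx
        have := (((hhd x ⟨ha.1.trans_lt hx.1, hx.2⟩).sub_const (h β)).const_mul N).exp
        exact this.congr_deriv (by ring)
      · exact (hIntegrable _ (hgc.mul (hEc N)) a ha β hβ ha.2).const_mul N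
    rw [intervalIntegral.integral_const_mul] at h1
    rw [h1]; simp
  have hsplit : ∀ N : ℝ, N * Real.exp (-N * h β) * ∫ x in α..β, Φ x * Real.exp (N * h x)
      = L * (1 - Real.exp (N * (h α - h β)))
        + N * ∫ x in α..β, r x * Real.exp (N * (h x - h β)) := by
    intro N
    have hα : α ∈ Icc α β := left_mem_Icc.2 hαβ.le
    rw [← hftc N α hα, mul_assoc, mul_left_comm L, ← mul_add,
      ← intervalIntegral.integral_const_mul L,
      ← intervalIntegral.integral_const_mul (Real.exp _), ← intervalIntegral.integral_add]
    · congr 1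
      apply intervalIntegral.integral_congr
      intro x _
      have : Real.exp (N * (h x - h β)) = Real.exp (-N * h β) * Real.exp (N * h x) := by
        rw [← Real.exp_add]; ring_nf
      simp only [hr, this]
      ring
    · exact (hIntegrable _ (hgc.mul (hEc N)) α hα β hβ hαβ.le).const_mul L
    · exact hIntegrable _ (hrc.mul (hEc N)) α hα β hβ hαβ.le
  simp_rw [hsplit]
  have hexp : ∀ c : ℝ, c < 0 → Tendsto (fun N : ℝ => Real.exp (N * c)) atTop (nhds 0) :=
    fun c hc => Real.tendsto_exp_atBot.comp (tendsto_id.atTop_mul_const_of_neg hc)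
  have hNexp : ∀ c : ℝ, 0 < c → Tendsto (fun N : ℝ => N * Real.exp (-c * N)) atTop (nhds 0) := by
    intro c hc
    simpa using tendsto_rpow_mul_exp_neg_mul_atTop_nhds_zero 1 c hc
  have hmain : Tendsto (fun N : ℝ => L * (1 - Real.exp (N * (h α - h β)))) atTop (nhds L) := by
    have := ((hexp (h α - h β) (sub_neg.2 (hmax α ⟨le_rfl, hαβ⟩))).const_sub 1).const_mul L
    simpa using this
  suffices hrem : Tendsto (fun N : ℝ => N * ∫ x in α..β, r x * Real.exp (N * (h x - h β)))
      atTop (nhds 0) by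
    simpa using hmain.add hrem
  rw [Metric.tendsto_atTop']
  intro ε hε
  -- local bound near β
  have hrd : HasDerivWithinAt r 0 (Icc α β) β := by
    have := hΦd.sub (hgd.const_mul L)
    refine HasDerivWithinAt.congr_deriv this ?_
    rw [hL, div_mul_cancel₀ _ hh''.ne, sub_self]
  have hr0 : r β = 0 := by simp [hr, hΦβ, hh']
  have e1 := (hasDerivWithinAt_iff_isLittleO.1 hrd).def (c := ε / 2 * (-B / 2)) (by nlinarith)
  have e2 := (hasDerivWithinAt_iff_isLittleO.1 hgd).def (c := -B / 2) (by linarith)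
  obtain ⟨δ, hδ, hball⟩ := Metric.mem_nhdsWithin_iff.1 (e1.and e2)
  set γ := max α (β - δ / 2) with hγ
  have hγβ : γ < β := max_lt hαβ (by linarith)
  have hαγ : α ≤ γ := le_max_left _ _
  have hγm : γ ∈ Icc α β := ⟨hαγ, hγβ.le⟩
  have hα : α ∈ Icc α β := left_mem_Icc.2 hαβ.le
  have hloc : ∀ x ∈ Icc γ β, |r x| ≤ ε / 2 * g x := by
    intro x hx
    have hxd : β - δ / 2 ≤ x := (le_max_right _ _).trans hx.1
    have hxb : x ∈ Metric.ball β δ := by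
      rw [Metric.mem_ball, Real.dist_eq, abs_lt]
      constructor <;> linarith [hx.2]
    obtain ⟨h1, h2⟩ := hball ⟨hxb, hαγ.trans hx.1, hx.2⟩
    rw [hr0] at h1
    rw [hh'] at h2
    simp only [sub_zero, smul_eq_mul, mul_zero, Real.norm_eq_abs] at h1 h2
    rw [abs_of_nonpos (sub_nonpos.2 hx.2)] at h1 h2
    have h3 := (abs_le.1 h2).1
    have h4 : -B / 2 * -(x - β) ≤ g x := by nlinarith
    calc |r x| ≤ ε / 2 * (-B / 2 * -(x - β)) := by rw [← mul_assoc]; exact h1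
      _ ≤ _ := by gcongr
  -- far bound
  obtain ⟨x0, hx0, hx0max⟩ := isCompact_Icc.exists_isMaxOn (nonempty_Icc.2 hαγ)
    (hhc.mono (Icc_subset_Icc le_rfl hγβ.le))
  obtain ⟨M, hM⟩ := isCompact_Icc.exists_bound_of_continuousOn hrc
  set c := h β - h x0 with hc
  have hcpos : 0 < c := sub_pos.2 (hmax x0 ⟨hx0.1, hx0.2.trans_lt hγβ⟩)
  have hfar : Tendsto (fun N : ℝ => (M * |γ - α|) * (N * Real.exp (-c * N))) atTop (nhds 0) := by
    simpa using (hNexp c hcpos).const_mul (M * |γ - α|)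
  have hev := (hfar.eventually (gt_mem_nhds (half_pos hε))).and (eventually_gt_atTop 0)
  obtain ⟨N0, hN0⟩ := eventually_atTop.1 hev
  refine ⟨N0, fun N hN => ?_⟩
  obtain ⟨hN1, hNpos⟩ := hN0 N hN.le
  have hI : ContinuousOn (fun x => r x * Real.exp (N * (h x - h β))) (Icc α β) := hrc.mul (hEc N)
  rw [dist_zero_right, Real.norm_eq_abs, ← intervalIntegral.integral_add_adjacent_intervals
    (hIntegrable _ hI α hα γ hγm hαγ) (hIntegrable _ hI γ hγm β hβ hγβ.le),
    abs_mul, abs_of_pos hNpos]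
  have hA1 : |∫ x in α..γ, r x * Real.exp (N * (h x - h β))|
      ≤ (M * Real.exp (-c * N)) * |γ - α| := by
    rw [← Real.norm_eq_abs]
    apply intervalIntegral.norm_integral_le_of_norm_le_const
    intro x hx
    rw [uIoc_of_le hαγ] at hx
    have hxI : x ∈ Icc α γ := Ioc_subset_Icc_self hx
    have hm : h x ≤ h x0 := hx0max hxI
    have hMx := hM x ⟨hxI.1, hxI.2.trans hγβ.le⟩
    rw [norm_mul, Real.norm_eq_abs (Real.exp _), Real.abs_exp]
    have : Real.exp (N * (h x - h β)) ≤ Real.exp (-c * N) := by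
      apply Real.exp_le_exp.2
      rw [hc]; nlinarith
    exact mul_le_mul hMx this (Real.exp_nonneg _) ((norm_nonneg _).trans hMx)
  have hA2 : |∫ x in γ..β, r x * Real.exp (N * (h x - h β))|
      ≤ ε / 2 * ∫ x in γ..β, g x * Real.exp (N * (h x - h β)) := by
    rw [← Real.norm_eq_abs, ← intervalIntegral.integral_const_mul]
    apply intervalIntegral.norm_integral_le_of_norm_le hγβ.le
    · refine Eventually.of_forall fun x hx => ?_
      rw [norm_mul, Real.norm_eq_abs (Real.exp _), Real.abs_exp, ← mul_assoc]
      exact mul_le_mul_of_nonneg_right (hloc x (Ioc_subset_Icc_self hx)) (Real.exp_nonneg _)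
    · exact (hIntegrable _ (hgc.mul (hEc N)) γ hγm β hβ hγβ.le).const_mul _
  have hF := hftc N γ hγm
  have hpos := Real.exp_pos (N * (h γ - h β))
  calc N * |_ + _| ≤ N * ((M * Real.exp (-c * N)) * |γ - α|
        + ε / 2 * ∫ x in γ..β, g x * Real.exp (N * (h x - h β))) := by
        gcongr
        exact (abs_add_le _ _).trans (add_le_add hA1 hA2)
    _ = (M * |γ - α|) * (N * Real.exp (-c * N))
        + ε / 2 * (N * ∫ x in γ..β, g x * Real.exp (N * (h x - h β))) := by ring
    _ < ε := by rw [hF]; nlinarith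
end
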